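/- arXiv:1210.2910 — 9 statements merged into one kernel-verified Lean document; each statement's English description precedes it below -/
import Mathlib

section
/- Let S and T be numerical semigroups and let φ : S → T be a surjective homomorphism of additive semigroups. Then S = T. -/
/-!
Additivity gives `φ (n * a) = n * φ a` for `n ≥ 1`, so computing `φ (a * b)` in two ways yields
`b * φ a = a * φ b` on `S`: the map `φ` has constant ratio. As `S` contains two consecutive
integers, this ratio is a natural number `k`, so `φ s = k * s` on `S` and `k` divides every
element of `T`. But `T` contains two consecutive integers as well, whence `k = 1`, and `φ` is
the identity on `S`.
-/

/-- A numerical semigroup: a subsemigroup of the positive integers (under addition)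
whose complement in the positive integers is finite. -/
def IsNumericalSemigroup (S : Set ℕ) : Prop :=
  (∀ x ∈ S, 0 < x) ∧ (∀ x ∈ S, ∀ y ∈ S, x + y ∈ S) ∧ {n : ℕ | 0 < n ∧ n ∉ S}.Finite

lemma IsNumericalSemigroup.exists_forall_ge_mem {S : Set ℕ} (hS : IsNumericalSemigroup S) :
    ∃ N, 0 < N ∧ ∀ n, N ≤ n → n ∈ S := by
  obtain ⟨M, hM⟩ := hS.2.2.bddAbove
  refine ⟨M + 1, by omega, fun n hn => ?_⟩
  by_contra h
  have : n ≤ M := hM ⟨by omega, h⟩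
  omega

/-- Multiples of an element are indexed by `n + 1` because `0` does not belong to `S`. -/
lemma IsNumericalSemigroup.map_succ_mul {S : Set ℕ} (hS : IsNumericalSemigroup S) {φ : ℕ → ℕ}
    (hhom : ∀ a ∈ S, ∀ b ∈ S, φ (a + b) = φ a + φ b) {a : ℕ} (ha : a ∈ S) (n : ℕ) :
    (n + 1) * a ∈ S ∧ φ ((n + 1) * a) = (n + 1) * φ a := by
  induction n with
  | zero => simpa using ha
  | succ n ih =>
    rw [add_mul (n + 1) 1 a, one_mul]
    exact ⟨hS.2.1 _ ih.1 _ ha, by rw [hhom _ ih.1 _ ha, ih.2]; ring⟩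

lemma IsNumericalSemigroup.mul_map_comm {S : Set ℕ} (hS : IsNumericalSemigroup S) {φ : ℕ → ℕ}
    (hhom : ∀ a ∈ S, ∀ b ∈ S, φ (a + b) = φ a + φ b) {a b : ℕ} (ha : a ∈ S) (hb : b ∈ S) :
    b * φ a = a * φ b := by
  obtain ⟨m, rfl⟩ := Nat.exists_eq_succ_of_ne_zero (hS.1 a ha).ne'
  obtain ⟨n, rfl⟩ := Nat.exists_eq_succ_of_ne_zero (hS.1 b hb).ne'
  have h1 := (hS.map_succ_mul hhom ha n).2
  have h2 := (hS.map_succ_mul hhom hb m).2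
  rw [Nat.succ_eq_add_one, Nat.succ_eq_add_one] at *
  rw [← h1, ← h2, mul_comm]

/-- a surjective additive-semigroup homomorphism between numerical
semigroups forces the two semigroups to be equal. -/
theorem stmt_0 (S T : Set ℕ) (hS : IsNumericalSemigroup S) (hT : IsNumericalSemigroup T)
    (φ : ℕ → ℕ) (hmaps : ∀ s ∈ S, φ s ∈ T)
    (hhom : ∀ a ∈ S, ∀ b ∈ S, φ (a + b) = φ a + φ b)
    (hsurj : ∀ t ∈ T, ∃ s ∈ S, φ s = t) :
    S = T := by
  obtain ⟨N, hN, hNS⟩ := hS.exists_forall_ge_mem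
  obtain ⟨M, -, hMT⟩ := hT.exists_forall_ge_mem
  -- `N * φ (N + 1) = (N + 1) * φ N` and `N`, `N + 1` are coprime, so `N` divides `φ N`.
  obtain ⟨k, hk⟩ : N ∣ φ N := by
    have h := hS.mul_map_comm hhom (hNS N le_rfl) (hNS (N + 1) (by omega))
    exact (Nat.coprime_self_add_right.mpr (Nat.coprime_one_right N)).dvd_of_dvd_mul_left
      ⟨_, h⟩
  have hφ : ∀ s ∈ S, φ s = k * s := by
    intro s hs
    have h := hS.mul_map_comm hhom (hNS N le_rfl) hs
    rw [hk] at h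
    exact Nat.eq_of_mul_eq_mul_left hN (by linarith)
  have hdvd : ∀ t ∈ T, k ∣ t := by
    intro t ht
    obtain ⟨s, hs, rfl⟩ := hsurj t ht
    exact ⟨s, hφ s hs⟩
  have hk1 : k = 1 := Nat.dvd_one.mp
    ((Nat.dvd_add_right (hdvd M (hMT M le_rfl))).mp (hdvd (M + 1) (hMT _ (by omega))))
  have hid : ∀ s ∈ S, φ s = s := fun s hs => by rw [hφ s hs, hk1, one_mul]
  ext x
  constructor
  · intro hx
    exact hid x hx ▸ hmaps x hx
  · intro hx
    obtain ⟨s, hs, rfl⟩ := hsurj x hx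
    rwa [hid s hs]
end

section
/- Let S be a numerical semigroup and let k be a positive integer. Then there exists a numerical semigroup T such that the Rees quotient S/I_k(S) is isomorphic (as a semigroup) to the Rees quotient T/I_{c(T)}(T), where c(T) is the conductor of T. -/
/-- for every numerical semigroup `S` and positive integer `k` there is a
numerical semigroup `T` (with conductor `c`) such that `S / I_k(S)` is isomorphic to
`T / I_c(T)`.  The isomorphism is expressed concretely: a bijection `φ` between the
finite parts `{x ∈ S | x < k}` and `{x ∈ T | x < c}` such that products correspond
(sums falling into the ideal on one side do so on the other, and finite sums are
preserved); such a `φ`, extended by `∞ ↦ ∞`, is exactly a semigroup isomorphism of the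
Rees quotients. -/
theorem stmt_6 (S : Set ℕ) (hS : IsNumericalSemigroup S) (k : ℕ) (hk : 0 < k) :
    ∃ T : Set ℕ, ∃ c : ℕ, IsNumericalSemigroup T ∧
      IsLeast {x | x ∈ T ∧ ∀ n, x ≤ n → n ∈ T} c ∧
      ∃ φ : ℕ → ℕ,
        Set.BijOn φ {x | x ∈ S ∧ x < k} {x | x ∈ T ∧ x < c} ∧
        ∀ x, x ∈ S ∧ x < k → ∀ y, y ∈ S ∧ y < k →
          ((x + y < k ↔ φ x + φ y < c) ∧ (x + y < k → φ (x + y) = φ x + φ y)) := by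
  obtain ⟨hpos, hadd, -⟩ := hS
  refine ⟨{n | (∃ x ∈ S, x < k ∧ n = 2 * x) ∨ 2 * k ≤ n}, 2 * k, ⟨?_, ?_, ?_⟩,
    ⟨⟨Or.inr le_rfl, fun n hn => Or.inr hn⟩, ?_⟩, fun x => 2 * x, ⟨?_, ?_, ?_⟩, ?_⟩
  · rintro n (⟨x, hx, -, rfl⟩ | hn)
    · have := hpos x hx
      omega
    · omega
  · rintro m (⟨x, hx, -, rfl⟩ | hm) n (⟨y, hy, -, rfl⟩ | hn)
    · rcases lt_or_ge (x + y) k with h | h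
      · exact Or.inl ⟨x + y, hadd x hx y hy, h, by ring⟩
      · exact Or.inr (by omega)
    all_goals exact Or.inr (by omega)
  · refine (Set.finite_lt_nat (2 * k)).subset ?_
    rintro n ⟨-, hn⟩
    by_contra h
    exact hn (Or.inr (not_lt.mp h))
  · rintro m ⟨-, hm⟩
    by_contra h
    -- A smaller conductor would force the odd number `2 * k - 1` into `T`.
    rcases hm (2 * k - 1) (by omega) with ⟨x, -, -, h'⟩ | h' <;> omega
  · rintro x ⟨hx, hxk⟩
    exact ⟨Or.inl ⟨x, hx, hxk, rfl⟩, by dsimp only; omega⟩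
  · intro x _ y _ h
    dsimp only at h
    omega
  · rintro n ⟨⟨x, hx, hxk, rfl⟩ | hn, hnk⟩
    · exact ⟨x, ⟨hx, hxk⟩, rfl⟩
    · omega
  · intro x _ y _
    dsimp only
    omega
end

section
/- There exist a numerical semigroup S, a proper ideal I of S, and a semigroup congruence θ on the Rees quotient S/I such that the quotient semigroup (S/I)/θ is not isomorphic to any Rees quotient of a numerical semigroup by a proper ideal. (Witnesses: S = ⟨4,5⟩, I = I₁₂(S) = {x ∈ S : x ≥ 12}, and θ the congruence generated by the pair (9,10); the quotient fails the cancellation law on its finite part.) In particular, the class of Rees quotient numerical semigroups is not closed under homomorphic images. -/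
/-- The Rees congruence associated with an ideal `I`: two elements are identified iff
they are equal or both lie in `I`. -/
def ReesRel (I : Set ℕ) (a b : ℕ) : Prop := a = b ∨ (a ∈ I ∧ b ∈ I)

/-- there exist a numerical semigroup `S`, a proper ideal `I` of `S`, and
a semigroup congruence `θ` on the Rees quotient `S / I` such that `(S / I) / θ` is not
isomorphic to any Rees quotient of a numerical semigroup by a proper ideal.
Congruences on `S / I` correspond exactly to congruences `ρ` on `S` containing the
Rees congruence of `I`, and `(S / I) / θ = S / ρ`; an isomorphism from `S / ρ` onto
a Rees quotient `T / J` is a map `g` on representatives which is a homomorphism modulo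
the Rees congruence of `J`, identifies `ρ`-classes with Rees classes, and is
surjective modulo the Rees congruence of `J`. -/
theorem stmt_8 :
    ∃ S I : Set ℕ, IsNumericalSemigroup S ∧ I ⊆ S ∧ I.Nonempty ∧
      (∀ x ∈ I, ∀ s ∈ S, x + s ∈ I) ∧ I ≠ S ∧
      ∃ ρ : ℕ → ℕ → Prop,
        (∀ a ∈ S, ρ a a) ∧
        (∀ a b, ρ a b → ρ b a) ∧
        (∀ a b c, ρ a b → ρ b c → ρ a c) ∧
        (∀ a ∈ S, ∀ b ∈ S, ∀ c ∈ S, ∀ d ∈ S, ρ a b → ρ c d → ρ (a + c) (b + d)) ∧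
        (∀ a ∈ I, ∀ b ∈ I, ρ a b) ∧
        ¬ ∃ T J : Set ℕ, IsNumericalSemigroup T ∧ J ⊆ T ∧ J.Nonempty ∧
            (∀ x ∈ J, ∀ s ∈ T, x + s ∈ J) ∧ J ≠ T ∧
            ∃ g : ℕ → ℕ,
              (∀ s ∈ S, g s ∈ T) ∧
              (∀ a ∈ S, ∀ b ∈ S, ReesRel J (g (a + b)) (g a + g b)) ∧
              (∀ a ∈ S, ∀ b ∈ S, (ρ a b ↔ ReesRel J (g a) (g b))) ∧
              (∀ t ∈ T, ∃ s ∈ S, ReesRel J (g s) t) := by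
  refine ⟨{n | n = 4 ∨ n = 5 ∨ n = 8 ∨ n = 9 ∨ n = 10 ∨ 12 ≤ n}, {n | 12 ≤ n},
    ⟨?_, ?_, ?_⟩, ?_, ⟨12, le_refl 12⟩, ?_, ?_,
    fun a b => a = b ∨ (12 ≤ a ∧ 12 ≤ b) ∨ ((a = 9 ∨ a = 10) ∧ (b = 9 ∨ b = 10)),
    ?_, ?_, ?_, ?_, ?_, ?_⟩
  · intro x hx
    simp only [Set.mem_ofPred_eq] at hx
    omega
  · intro x hx y hy
    simp only [Set.mem_ofPred_eq] at hx hy ⊢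
    omega
  · refine (Set.finite_Iio 12).subset ?_
    rintro n ⟨-, hn⟩
    simp only [Set.mem_ofPred_eq, Set.mem_Iio] at hn ⊢
    omega
  · intro x hx
    simp only [Set.mem_ofPred_eq] at hx ⊢
    omega
  · intro x hx s _
    simp only [Set.mem_ofPred_eq] at hx ⊢
    omega
  · intro h
    have h4 : (4 : ℕ) ∈ {n : ℕ | 12 ≤ n} := by
      rw [h]
      exact Or.inl rfl
    simp at h4
  · intro a _
    exact Or.inl rfl
  · intro a b h
    omega
  · intro a b c h h'
    omega
  · intro a ha b hb c hc d hd h h'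
    simp only [Set.mem_ofPred_eq] at ha hb hc hd
    omega
  · intro a ha b hb
    exact Or.inr (Or.inl ⟨ha, hb⟩)
  · rintro ⟨T, J, -, hJT, ⟨j, hj⟩, hJ, -, g, hgT, hadd, hiff, hsurj⟩
    have hmem : ∀ {a b : ℕ}, ReesRel J a b → b ∈ J → a ∈ J := by
      rintro a b (rfl | h) hb
      · exact hb
      · exact h.1
    have h12 : g 12 ∈ J := by
      -- Some `s` represents the zero of `T / J`, hence so does `s + 12`, which is congruent to `12`.
      obtain ⟨s, hs, hsj⟩ := hsurj j (hJT hj)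
      have hgs : g s ∈ J := hmem hsj hj
      have hsum : g (s + 12) ∈ J :=
        hmem (hadd s hs 12 (by simp)) (hJ _ hgs _ (hgT 12 (by simp)))
      have hrel := (hiff 12 (by simp) (s + 12) (by simp)).1 (by omega)
      exact hmem hrel hsum
    have h9 : g 9 ∉ J := by
      intro h
      have := (hiff 9 (by simp) 12 (by simp)).2 (Or.inr ⟨h, h12⟩)
      omega
    have e1 : g 9 = g 4 + g 5 :=
      (hadd 4 (by simp) 5 (by simp)).resolve_right fun h => h9 h.1
    have e2 : g 9 = g 10 :=
      ((hiff 9 (by simp) 10 (by simp)).1 (by omega)).resolve_right fun h => h9 h.1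
    have e3 : g 10 = g 5 + g 5 :=
      (hadd 5 (by simp) 5 (by simp)).resolve_right fun h => h9 (e2 ▸ h.1)
    have := (hiff 4 (by simp) 5 (by simp)).2 (Or.inl (by omega))
    omega
end

section
/- There exist numerical semigroups S and T with proper ideals I of S and J of T such that the direct product semigroup (S/I) × (T/J) is not isomorphic to any Rees quotient of a numerical semigroup by a proper ideal. (Witnesses: S = ⟨2,5⟩ with I = I₄(S), so S/I = {2, ∞}, and T = ⟨2,7⟩ with J = I₆(T), so T/J = {2, 4, ∞}; the product fails the cancellation law on its finite part.) In particular, the class of Rees quotient numerical semigroups is not closed under finite direct products. -/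
/-- there exist numerical semigroups `S`, `T` with proper ideals `I`, `J`
such that the direct product `(S / I) × (T / J)` is not isomorphic to any Rees quotient
`U / K` of a numerical semigroup by a proper ideal.  Elements of the product are
represented by pairs `(a, b)` with `a ∈ S`, `b ∈ T`, identified by the componentwise
Rees congruences; an isomorphism onto `U / K` is a map `g` on representatives which is
a homomorphism modulo the Rees congruence of `K`, identifies product classes with Rees
classes, and is surjective modulo the Rees congruence of `K`. -/
theorem stmt_9 :
    ∃ S I T J : Set ℕ,
      IsNumericalSemigroup S ∧ I ⊆ S ∧ I.Nonempty ∧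
        (∀ x ∈ I, ∀ s ∈ S, x + s ∈ I) ∧ I ≠ S ∧
      IsNumericalSemigroup T ∧ J ⊆ T ∧ J.Nonempty ∧
        (∀ x ∈ J, ∀ s ∈ T, x + s ∈ J) ∧ J ≠ T ∧
      ¬ ∃ U K : Set ℕ, IsNumericalSemigroup U ∧ K ⊆ U ∧ K.Nonempty ∧
          (∀ x ∈ K, ∀ s ∈ U, x + s ∈ K) ∧ K ≠ U ∧
          ∃ g : ℕ → ℕ → ℕ,
            (∀ a ∈ S, ∀ b ∈ T, g a b ∈ U) ∧
            (∀ a ∈ S, ∀ b ∈ T, ∀ a' ∈ S, ∀ b' ∈ T,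
              ReesRel K (g (a + a') (b + b')) (g a b + g a' b')) ∧
            (∀ a ∈ S, ∀ b ∈ T, ∀ a' ∈ S, ∀ b' ∈ T,
              ((ReesRel I a a' ∧ ReesRel J b b') ↔ ReesRel K (g a b) (g a' b'))) ∧
            (∀ u ∈ U, ∃ a ∈ S, ∃ b ∈ T, ReesRel K (g a b) u) := by
  have hpos : IsNumericalSemigroup {n : ℕ | 1 ≤ n} := by
    refine ⟨fun x hx => hx, fun x hx y hy => ?_, ?_⟩
    · simp only [Set.mem_setOf_eq] at *
      omega
    · convert Set.finite_empty
      ext n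
      simp only [Set.mem_setOf_eq, Set.mem_empty_iff_false, iff_false]
      omega
  refine ⟨{n | 1 ≤ n}, {n | 2 ≤ n}, {n | 1 ≤ n}, {n | 3 ≤ n}, hpos, ?_, ⟨2, ?_⟩, ?_, ?_,
    hpos, ?_, ⟨3, ?_⟩, ?_, ?_, ?_⟩
  · intro x hx
    simp only [Set.mem_setOf_eq] at *
    omega
  · simp
  · intro x hx s hs
    simp only [Set.mem_setOf_eq] at *
    omega
  · intro h
    have := h.symm.subset (show (1 : ℕ) ∈ {n : ℕ | 1 ≤ n} by simp)
    simp at this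
  · intro x hx
    simp only [Set.mem_setOf_eq] at *
    omega
  · simp
  · intro x hx s hs
    simp only [Set.mem_setOf_eq] at *
    omega
  · intro h
    have := h.symm.subset (show (1 : ℕ) ∈ {n : ℕ | 1 ≤ n} by simp)
    simp at this
  rintro ⟨U, K, -, hKU, ⟨k, hk⟩, hK, -, g, hgU, hadd, hiff, hsurj⟩
  simp only [Set.mem_setOf_eq] at hgU hadd hiff hsurj
  obtain ⟨a, ha, b, hb, hab⟩ := hsurj k (hKU hk)
  have habK : g a b ∈ K := by
    rcases hab with h | h
    · exact h ▸ hk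
    · exact h.1
  -- Adding `(2, 3)`, a representative of the zero, to a representative of the zero class
  -- gives one whose second coordinate is visibly in `J`.
  have hzero : g (a + 2) (b + 3) ∈ K := by
    have hs := hK _ habK _ (hgU 2 (by norm_num) 3 (by norm_num))
    rcases hadd a ha b hb 2 (by norm_num) 3 (by norm_num) with h | h
    · exact h ▸ hs
    · exact h.1
  have h22 : g 2 2 ∉ K := by
    intro h
    have := ((hiff 2 (by norm_num) 2 (by norm_num) (a + 2) (by omega) (b + 3) (by omega)).2
      (Or.inr ⟨h, hzero⟩)).2
    simp only [ReesRel, Set.mem_setOf_eq] at this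
    omega
  have e1 : g 2 2 = g 1 1 + g 1 1 :=
    (hadd 1 le_rfl 1 le_rfl 1 le_rfl 1 le_rfl).resolve_right fun h => h22 h.1
  have e2 : g 2 2 = g 3 2 :=
    ((hiff 2 (by norm_num) 2 (by norm_num) 3 (by norm_num) 2 (by norm_num)).1
      ⟨Or.inr ⟨by simp, by simp⟩, Or.inl rfl⟩).resolve_right fun h => h22 h.1
  have e3 : g 3 2 = g 2 1 + g 1 1 :=
    (hadd 2 (by norm_num) 1 le_rfl 1 le_rfl 1 le_rfl).resolve_right fun h => h22 (e2 ▸ h.1)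
  have e4 : g 1 1 = g 2 1 := by omega
  have := ((hiff 1 le_rfl 1 le_rfl 2 (by norm_num) 1 le_rfl).2 (Or.inl e4)).1
  simp [ReesRel] at this
end

section
/- Let Q be a finite commutative semigroup with an absorbing zero element 0 which is nilpotent, whose minimal generating set is a two-element set {a, b} with a ≠ b, and which satisfies a³ = b³ = 0, |Q² \ Q³| = 2 and |Q³ \ Q⁴| = 1 (where Qⁱ denotes the set of products of i elements of Q). Then Q is not isomorphic to any Rees quotient M/I_k(M) of a numerical semigroup M by an ideal determined by a cutting point k. -/
/-- `SPow Q i` is the set `Qⁱ` of products of `i` elements of `Q` (for `i ≥ 1`). -/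
def SPow (Q : Type*) [Mul Q] : ℕ → Set Q
  | 0 => Set.univ
  | 1 => Set.univ
  | n + 2 => {q | ∃ a ∈ SPow Q (n + 1), ∃ b : Q, q = a * b}

theorem mem_SPow_four {Q : Type*} [Semigroup Q] (p q r s : Q) :
    p * q * r * s ∈ SPow Q 4 :=
  ⟨p * q * r, ⟨p * q, ⟨p, Set.mem_univ p, q, rfl⟩, r, rfl⟩, s, rfl⟩

/-- let `Q` be a finite commutative nilpotent semigroup with absorbing
zero `z`, whose minimal generating set (= set of indecomposable elements) is `{a, b}`
with `a ≠ b`, satisfying `a³ = b³ = 0`, `|Q² \ Q³| = 2` and `|Q³ \ Q⁴| = 1`.  Then `Q`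
is not isomorphic to any Rees quotient `M / I_k(M)` of a numerical semigroup `M` by an
ideal determined by a cutting point `k`.  (An isomorphism would be a bijection `f`
from the finite part `{x ∈ M | x < k}` onto `Q \ {z}` transporting the operation,
extended by `∞ ↦ z`.) -/
theorem stmt_10 (Q : Type*) [Semigroup Q] [Finite Q]
    (hcomm : ∀ x y : Q, x * y = y * x)
    (z : Q) (hz : ∀ q : Q, z * q = z ∧ q * z = z)
    (hnilp : ∃ n : ℕ, 1 ≤ n ∧ SPow Q n = {z})
    (a b : Q) (hab : a ≠ b)
    (hindec : {q : Q | ¬ ∃ u v : Q, q = u * v} = {a, b})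
    (hgen : Subsemigroup.closure {a, b} = (⊤ : Subsemigroup Q))
    (ha3 : a * a * a = z) (hb3 : b * b * b = z)
    (h23 : (SPow Q 2 \ SPow Q 3).ncard = 2)
    (h34 : (SPow Q 3 \ SPow Q 4).ncard = 1) :
    ¬ ∃ M : Set ℕ, ∃ k : ℕ, IsNumericalSemigroup M ∧ 0 < k ∧
        ∃ f : ℕ → Q,
          Set.BijOn f {x | x ∈ M ∧ x < k} {q : Q | q ≠ z} ∧
          ∀ x, x ∈ M ∧ x < k → ∀ y, y ∈ M ∧ y < k →
            ((x + y < k → f (x + y) = f x * f y) ∧ (k ≤ x + y → f x * f y = z)) := by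
  have hne : (SPow Q 3 \ SPow Q 4).Nonempty := by
    apply Set.nonempty_of_ncard_ne_zero
    omega
  obtain ⟨t, ⟨s, ⟨c, -, d, rfl⟩, e, rfl⟩, ht4⟩ := hne
  have hnz : c * d * e ≠ z := by
    intro h
    apply ht4
    have h4 := mem_SPow_four z z z z
    rw [(hz z).1, (hz z).1, (hz z).1] at h4
    rwa [h]
  have cube : ∀ g : Q, (¬ ∃ u v : Q, g = u * v) → g * g * g = z := by
    intro g hg
    have hmem : g ∈ ({a, b} : Set Q) := hindec ▸ hg
    rcases hmem with rfl | rfl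
    · exact ha3
    · exact hb3
  have hc : c * c * c = z := by
    apply cube
    rintro ⟨u, v, rfl⟩
    exact ht4 (mem_SPow_four u v d e)
  have hd : d * d * d = z := by
    apply cube
    rintro ⟨u, v, rfl⟩
    apply ht4
    rw [← mul_assoc c u v]
    exact mem_SPow_four c u v e
  have he : e * e * e = z := by
    apply cube
    rintro ⟨u, v, rfl⟩
    apply ht4
    rw [← mul_assoc (c * d) u v]
    exact mem_SPow_four c d u v
  rintro ⟨M, k, ⟨-, hadd, -⟩, -, f, hf, hmul⟩
  have surj : ∀ g : Q, g ≠ z → ∃ x, (x ∈ M ∧ x < k) ∧ f x = g := fun g hg => hf.surjOn hg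
  obtain ⟨x, hx, rfl⟩ := surj c (fun h => hnz (by rw [h, (hz d).1, (hz e).1]))
  obtain ⟨y, hy, rfl⟩ := surj d (fun h => hnz (by rw [h, (hz _).2, (hz e).1]))
  obtain ⟨w, hw, rfl⟩ := surj e (fun h => hnz (by rw [h, (hz _).2]))
  have hxy : x + y < k := by
    by_contra h
    exact hnz (by rw [(hmul x hx y hy).2 (not_lt.mp h), (hz _).1])
  have hxyM : x + y ∈ M ∧ x + y < k := ⟨hadd x hx.1 y hy.1, hxy⟩
  have hxyw : x + y + w < k := by
    by_contra h
    exact hnz (by rw [← (hmul x hx y hy).1 hxy, (hmul _ hxyM w hw).2 (not_lt.mp h)])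
  have large : ∀ m, m ∈ M ∧ m < k → f m * f m * f m = z → k ≤ m + m + m := by
    intro m hm hm3
    by_contra h
    have h2 : m + m ∈ M ∧ m + m < k := ⟨hadd m hm.1 m hm.1, by omega⟩
    have h3 : m + m + m ∈ M ∧ m + m + m < k := ⟨hadd _ h2.1 m hm.1, by omega⟩
    apply hf.mapsTo h3
    rw [(hmul _ h2 m hm).1 h3.2, (hmul m hm m hm).1 h2.2, hm3]
  have hx3 := large x hx hc
  have hy3 := large y hy hd
  have hw3 := large w hw he
  -- Summing the three bounds gives `3k ≤ 3(x + y + w) < 3k`.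
  omega
end

section
/- There exist a numerical semigroup N and a proper ideal I of N such that the Rees quotient N/I is not isomorphic to M/I_k(M) for any numerical semigroup M and positive integer k. (Witnesses: N = ⟨3,5⟩ and I = {6} + N⁰ = {6, 9, 11, 12} ∪ {x ∈ ℕ : x ≥ 14}, giving the six-element quotient {3, 5, 8, 10, 13, ∞}.) In particular, a Rees quotient numerical semigroup is not necessarily determined by a numerical semigroup and a cutting point. -/
/-- there exist a numerical semigroup `N` and a proper ideal `I` of `N`
such that the Rees quotient `N / I` is not isomorphic to `M / I_k(M)` for any
numerical semigroup `M` and positive integer `k`.  (An isomorphism would be a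
bijection `φ` between the finite parts `N \ I` and `{x ∈ M | x < k}` transporting the
operation, extended by `∞ ↦ ∞`.)  In particular, a Rees quotient numerical semigroup
need not be determined by a numerical semigroup and a cutting point. -/
theorem stmt_11 :
    ∃ N I : Set ℕ, IsNumericalSemigroup N ∧ I ⊆ N ∧ I.Nonempty ∧
      (∀ x ∈ I, ∀ s ∈ N, x + s ∈ I) ∧ I ≠ N ∧
      ¬ ∃ M : Set ℕ, ∃ k : ℕ, IsNumericalSemigroup M ∧ 0 < k ∧
          ∃ φ : ℕ → ℕ,
            Set.BijOn φ (N \ I) {x | x ∈ M ∧ x < k} ∧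
            ∀ x ∈ N \ I, ∀ y ∈ N \ I,
              ((x + y ∈ I ↔ k ≤ φ x + φ y) ∧ (x + y ∉ I → φ (x + y) = φ x + φ y)) := by
  -- `N = ⟨3, 5⟩` and `I = {6} + N⁰`, listed explicitly so that membership is linear arithmetic.
  refine ⟨{x | x = 3 ∨ x = 5 ∨ x = 6 ∨ 8 ≤ x}, {x | x = 6 ∨ x = 9 ∨ x = 11 ∨ x = 12 ∨ 14 ≤ x},
    ⟨?_, ?_, ?_⟩, ?_, ⟨6, Or.inl rfl⟩, ?_, ?_, ?_⟩
  · simp only [Set.mem_ofPred_eq]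
    omega
  · simp only [Set.mem_ofPred_eq]
    omega
  · refine (Set.finite_Iio 8).subset fun n hn => ?_
    simp only [Set.mem_ofPred_eq, Set.mem_Iio] at hn ⊢
    omega
  · intro x hx
    simp only [Set.mem_ofPred_eq] at hx ⊢
    omega
  · simp only [Set.mem_ofPred_eq]
    omega
  · intro h
    have h3 := Set.ext_iff.mp h 3
    simp at h3
  · rintro ⟨M, k, -, -, φ, -, h⟩
    have h33 := (h 3 (by simp) 3 (by simp)).1
    have h55 := (h 5 (by simp) 5 (by simp)).2
    have h3T := (h 3 (by simp) 10 (by simp)).1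
    have h5T := (h 5 (by simp) 10 (by simp)).1
    norm_num at h33 h55 h3T h5T
    omega
end

section
/- Let M be a semigroup and I a two-sided ideal of M (a nonempty subset with MI ⊆ I and IM ⊆ I). Let X be a set, let R be a set of pairs of elements of the free semigroup X⁺ on X, and let φ : X⁺ → M be a surjective semigroup homomorphism whose kernel congruence {(u,v) : φ(u) = φ(v)} equals the congruence on X⁺ generated by R (so that ⟨X | R⟩ is a presentation of M). Let Y ⊆ I be an ideal generating system of I, i.e., I = M¹YM¹, and for each y ∈ Y fix a word w_y ∈ X⁺ with φ(w_y) = y. Then the kernel congruence of the composite homomorphism X⁺ → M → M/I (where M → M/I is the Rees quotient projection) equals the congruence on X⁺ generated by R ∪ {(w_y·x, w_y) : y ∈ Y, x ∈ X} ∪ {(x·w_y, w_y) : y ∈ Y, x ∈ X}. Equivalently, M/I is defined by the presentation with zero ⟨X | R, w_y = 0 (y ∈ Y)⟩. -/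
/-!
Modulo the enlarged relation set, every word `w y` with `y ∈ Y` is a two-sided zero: the defining
relations absorb one letter at a time, and induction on words (`absorb_right`, `absorb_left`)
absorbs an arbitrary word. Hence any two of them coincide, since `w y ~ w y * w y' ~ w y'`.
A word `u` with `φ u ∈ I` satisfies `φ u ∈ M¹yM¹` for some `y ∈ Y`; lifting the outer factors along
the surjection `φ` shows that `u` is congruent modulo `R` to a word containing `w y` as a factor,
hence to `w y`. Thus all words mapped into `I` form a single class. Conversely, the pulled-back
Rees congruence contains all the generating pairs.
-/

theorem absorb_right {X : Type*} (c : Con (FreeSemigroup X)) (z : FreeSemigroup X)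
    (h : ∀ x : X, c (z * FreeSemigroup.of x) z) (u : FreeSemigroup X) : c (z * u) z := by
  induction u using FreeSemigroup.recOnMul with
  | ih1 x => exact h x
  | ih2 x y h1 h2 =>
    rw [← mul_assoc]
    exact c.trans (c.mul h1 (c.refl y)) h2

theorem absorb_left {X : Type*} (c : Con (FreeSemigroup X)) (z : FreeSemigroup X)
    (h : ∀ x : X, c (FreeSemigroup.of x * z) z) (u : FreeSemigroup X) : c (u * z) z := by
  induction u using FreeSemigroup.recOnMul with
  | ih1 x => exact h x
  | ih2 x y h1 h2 =>
    rw [mul_assoc]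
    exact c.trans (c.mul (c.refl (FreeSemigroup.of x)) h2) h1

/-- The Rees congruence of the two-sided ideal `I`, pulled back along `φ`. -/
def reesPullback {S M : Type*} [Semigroup S] [Semigroup M] (φ : S →ₙ* M) (I : Set M)
    (hideal : ∀ x ∈ I, ∀ m : M, m * x ∈ I ∧ x * m ∈ I) : Con S where
  r u v := φ u = φ v ∨ (φ u ∈ I ∧ φ v ∈ I)
  iseqv :=
    { refl := fun _ => Or.inl rfl
      symm := by grind
      trans := by grind }
  mul' := by
    rintro a b c d h1 h2
    simp only [map_mul]
    rcases h1 with h1 | ⟨ha, hb⟩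
    · rcases h2 with h2 | ⟨hc, hd⟩
      · exact Or.inl (by rw [h1, h2])
      · exact Or.inr ⟨(hideal _ hc _).1, (hideal _ hd _).1⟩
    · exact Or.inr ⟨(hideal _ ha _).2, (hideal _ hb _).2⟩

/-- let `M` be a semigroup, `I` a two-sided ideal of `M`, and let
`⟨X | R⟩` be a presentation of `M`, i.e. `φ : X⁺ → M` is a surjective homomorphism
from the free semigroup on `X` whose kernel congruence is the congruence generated by
`R`.  Let `Y ⊆ I` be an ideal generating system of `I` (`I = M¹YM¹`) and for each
`y ∈ Y` fix a word `w y` with `φ (w y) = y`.  Then the kernel congruence of the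
composite `X⁺ → M → M/I` (whose kernel relation is `φ u = φ v ∨ (φ u ∈ I ∧ φ v ∈ I)`,
the Rees congruence pulled back) is the congruence generated by
`R ∪ {(w_y · x, w_y) : y ∈ Y, x ∈ X} ∪ {(x · w_y, w_y) : y ∈ Y, x ∈ X}`;
equivalently, `M/I` is presented with zero by `⟨X | R, w_y = 0 (y ∈ Y)⟩`. -/
theorem stmt_12 {X M : Type*} [Semigroup M]
    (I : Set M) (hne : I.Nonempty)
    (hideal : ∀ x ∈ I, ∀ m : M, m * x ∈ I ∧ x * m ∈ I)
    (R : FreeSemigroup X → FreeSemigroup X → Prop)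
    (φ : FreeSemigroup X →ₙ* M) (hsurj : Function.Surjective φ)
    (hker : ∀ u v, φ u = φ v ↔ conGen R u v)
    (Y : Set M) (hYI : Y ⊆ I)
    (hYgen : ∀ m : M, m ∈ I ↔ ∃ y ∈ Y, m = y ∨ (∃ a : M, m = a * y) ∨
      (∃ a : M, m = y * a) ∨ (∃ a c : M, m = a * y * c))
    (w : M → FreeSemigroup X) (hw : ∀ y ∈ Y, φ (w y) = y) :
    ∀ u v : FreeSemigroup X,
      (φ u = φ v ∨ (φ u ∈ I ∧ φ v ∈ I)) ↔
      conGen (fun p q => R p q ∨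
        ∃ y ∈ Y, ∃ x : X,
          (p = w y * FreeSemigroup.of x ∧ q = w y) ∨
          (p = FreeSemigroup.of x * w y ∧ q = w y)) u v := by
  intro u v
  set R' : FreeSemigroup X → FreeSemigroup X → Prop := fun p q => R p q ∨
        ∃ y ∈ Y, ∃ x : X,
          (p = w y * FreeSemigroup.of x ∧ q = w y) ∨
          (p = FreeSemigroup.of x * w y ∧ q = w y) with hR'
  have hof : ∀ {p q}, R' p q → conGen R' p q := fun h => ConGen.Rel.of _ _ h
  have hR : ∀ {p q}, φ p = φ q → conGen R' p q := fun {p q} h =>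
    (Con.conGen_le.2 fun a b hab => hof (Or.inl hab) : conGen R ≤ conGen R') ((hker p q).1 h)
  constructor
  · have hright : ∀ y ∈ Y, ∀ p, conGen R' (w y * p) (w y) := fun y hy p =>
      absorb_right _ _ (fun x => hof (Or.inr ⟨y, hy, x, Or.inl ⟨rfl, rfl⟩⟩)) p
    have hleft : ∀ y ∈ Y, ∀ p, conGen R' (p * w y) (w y) := fun y hy p =>
      absorb_left _ _ (fun x => hof (Or.inr ⟨y, hy, x, Or.inr ⟨rfl, rfl⟩⟩)) p
    have hI : ∀ p, φ p ∈ I → ∃ y ∈ Y, conGen R' p (w y) := by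
      intro p hp
      obtain ⟨y, hy, h⟩ := (hYgen _).1 hp
      refine ⟨y, hy, ?_⟩
      rcases h with h | ⟨a, h⟩ | ⟨a, h⟩ | ⟨a, c, h⟩
      · exact hR (by rw [h, hw y hy])
      · obtain ⟨a, rfl⟩ := hsurj a
        exact (conGen R').trans (hR (q := a * w y) (by rw [h, map_mul, hw y hy])) (hleft y hy a)
      · obtain ⟨a, rfl⟩ := hsurj a
        exact (conGen R').trans (hR (q := w y * a) (by rw [h, map_mul, hw y hy])) (hright y hy a)
      · obtain ⟨a, rfl⟩ := hsurj a
        obtain ⟨c, rfl⟩ := hsurj c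
        exact (conGen R').trans
          (hR (q := a * w y * c) (by rw [h, map_mul, map_mul, hw y hy]))
          ((conGen R').trans ((conGen R').mul (hleft y hy a) ((conGen R').refl c)) (hright y hy c))
    rintro (h | ⟨hu, hv⟩)
    · exact hR h
    · obtain ⟨y, hy, h1⟩ := hI u hu
      obtain ⟨y', hy', h2⟩ := hI v hv
      have hyy' : conGen R' (w y) (w y') :=
        (conGen R').trans ((conGen R').symm (hright y hy (w y'))) (hleft y' hy' (w y))
      exact (conGen R').trans h1 ((conGen R').trans hyy' ((conGen R').symm h2))
  · intro h
    have hle : conGen R' ≤ reesPullback φ I hideal := by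
      refine Con.conGen_le.2 ?_
      rintro p q (hpq | ⟨y, hy, x, ⟨rfl, rfl⟩ | ⟨rfl, rfl⟩⟩)
      · exact Or.inl ((hker p q).2 (ConGen.Rel.of _ _ hpq))
      · have hwI : φ (w y) ∈ I := by rw [hw y hy]; exact hYI hy
        exact Or.inr ⟨by rw [map_mul]; exact (hideal _ hwI _).2, hwI⟩
      · have hwI : φ (w y) ∈ I := by rw [hw y hy]; exact hYI hy
        exact Or.inr ⟨by rw [map_mul]; exact (hideal _ hwI _).1, hwI⟩
    exact hle h
end

section
/- Let Q₁ = S₁/I₁ and Q₂ = S₂/I₂ be Rees quotients of numerical semigroups by proper ideals, with minimal generating systems X₁ and X₂ respectively, and suppose |Q₁| = |Q₂|. Then a semigroup homomorphism φ : Q₁ → Q₂ is an isomorphism if and only if the restriction of φ to X₁ is a bijection from X₁ onto X₂. -/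
/-!
A homomorphism that is bijective preserves and reflects decomposability, hence restricts to a
bijection between the sets of indecomposable elements. Conversely, a Rees quotient `Q = S / I` is
finite, because `I ⊇ i + S` is cofinite, and it is generated by its indecomposable elements
(`RQNSData.generated`): nonzero elements are handled by strong induction on their unique
representative, and the zero element is a power of any nonzero element, one of which exists since
`I ≠ S`. So if `φ` maps `X₁` onto `X₂`, its range, being a subsemigroup containing `X₂`, is all
of `Q₂`; a surjection between finite sets of equal cardinality is bijective.
-/


/-- The data of a numerical semigroup `S` (a subsemigroup of the positive integers
with finite complement) together with a proper ideal `I` of `S`. -/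
structure RQNSData where
  S : Set ℕ
  I : Set ℕ
  pos : ∀ x ∈ S, 0 < x
  add_mem : ∀ x ∈ S, ∀ y ∈ S, x + y ∈ S
  cofinite : {n : ℕ | 0 < n ∧ n ∉ S}.Finite
  I_sub : I ⊆ S
  I_nonempty : I.Nonempty
  I_ideal : ∀ x ∈ I, ∀ s ∈ S, x + s ∈ I
  I_proper : I ≠ S

namespace RQNSData

/-- The Rees congruence on `S` determined by the ideal `I`. -/
def setoid (P : RQNSData) : Setoid {x : ℕ // x ∈ P.S} where
  r a b := a.1 = b.1 ∨ (a.1 ∈ P.I ∧ b.1 ∈ P.I)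
  iseqv := by
    refine ⟨fun a => Or.inl rfl, ?_, ?_⟩
    · rintro a b (h | ⟨h1, h2⟩)
      · exact Or.inl h.symm
      · exact Or.inr ⟨h2, h1⟩
    · rintro a b c (h | ⟨h1, h2⟩) (h' | ⟨h1', h2'⟩)
      · exact Or.inl (h.trans h')
      · exact Or.inr ⟨by rw [h]; exact h1', h2'⟩
      · exact Or.inr ⟨h1, by rw [← h']; exact h2⟩
      · exact Or.inr ⟨h1, h2'⟩

/-- The Rees quotient semigroup `S / I`. -/
def Q (P : RQNSData) : Type := Quotient P.setoid

instance (P : RQNSData) : Mul P.Q where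
  mul := Quotient.map₂ (fun a b => ⟨a.1 + b.1, P.add_mem _ a.2 _ b.2⟩) (by
    rintro a b (hab | ⟨ha, hb⟩) c d (hcd | ⟨hc, hd⟩)
    · exact Or.inl (by simp only [hab, hcd])
    · refine Or.inr ⟨?_, ?_⟩
      · have := P.I_ideal _ hc _ a.2
        simpa [Nat.add_comm] using this
      · have := P.I_ideal _ hd _ b.2
        simpa [Nat.add_comm, hab] using this
    · refine Or.inr ⟨P.I_ideal _ ha _ c.2, by
        have := P.I_ideal _ hb _ d.2
        simpa [hcd] using this⟩
    · exact Or.inr ⟨P.I_ideal _ ha _ c.2, P.I_ideal _ hb _ d.2⟩)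

/-- The minimal generating system of the Rees quotient: its set of indecomposable
elements. -/
def mingen (P : RQNSData) : Set P.Q := {q | ¬ ∃ u v : P.Q, q = u * v}

end RQNSData

namespace RQNSData

/-- The class in `S / I` of an element of `S`. -/
def cls (P : RQNSData) (a : ℕ) (ha : a ∈ P.S) : P.Q := Quotient.mk P.setoid ⟨a, ha⟩

lemma exists_cls (P : RQNSData) (q : P.Q) : ∃ a ha, q = P.cls a ha := by
  induction q using Quotient.inductionOn with
  | h a => exact ⟨a.1, a.2, rfl⟩

lemma cls_mul (P : RQNSData) {a b : ℕ} (ha : a ∈ P.S) (hb : b ∈ P.S) :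
    P.cls a ha * P.cls b hb = P.cls (a + b) (P.add_mem _ ha _ hb) := rfl

lemma cls_eq_iff (P : RQNSData) {a b : ℕ} (ha : a ∈ P.S) (hb : b ∈ P.S) :
    P.cls a ha = P.cls b hb ↔ a = b ∨ (a ∈ P.I ∧ b ∈ P.I) :=
  ⟨fun h => Quotient.exact h, fun h => Quotient.sound h⟩

lemma finite_compl_I (P : RQNSData) : {n : ℕ | n ∉ P.I}.Finite := by
  obtain ⟨i, hi⟩ := P.I_nonempty
  refine ((Set.finite_Iic i).union (P.cofinite.image (i + ·))).subset ?_
  intro n hn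
  by_cases h : n ≤ i
  · exact Or.inl h
  · refine Or.inr ⟨n - i, ⟨by omega, fun hs => hn ?_⟩, by simp only; omega⟩
    have := P.I_ideal i hi _ hs
    rwa [show i + (n - i) = n by omega] at this

instance (P : RQNSData) : Finite P.Q := by
  obtain ⟨i, hi⟩ := P.I_nonempty
  have := P.finite_compl_I.to_subtype
  -- The classes of `S \ I`, together with the class of `i`, exhaust the quotient.
  classical
  refine Finite.of_surjective (fun o : Option {n : ℕ | n ∉ P.I} =>
    match o with
    | none => P.cls i (P.I_sub hi)
    | some n => if h : n.1 ∈ P.S then P.cls n.1 h else P.cls i (P.I_sub hi)) ?_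
  intro q
  obtain ⟨a, ha, rfl⟩ := P.exists_cls q
  by_cases h : a ∈ P.I
  · exact ⟨none, (P.cls_eq_iff _ _).2 (Or.inr ⟨hi, h⟩)⟩
  · exact ⟨some ⟨a, h⟩, by simp [ha]⟩

/-- The indecomposable elements generate the Rees quotient. -/
lemma generated (P : RQNSData) (p : P.Q → Prop) (hgen : ∀ q ∈ P.mingen, p q)
    (hmul : ∀ u v, p u → p v → p (u * v)) (q : P.Q) : p q := by
  have key : ∀ s (hs : s ∈ P.S), s ∉ P.I → p (P.cls s hs) := by
    intro s
    induction s using Nat.strong_induction_on with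
    | _ s ih =>
      intro hs hI
      by_cases hm : P.cls s hs ∈ P.mingen
      · exact hgen _ hm
      · obtain ⟨u, v, huv⟩ := not_not.1 hm
        obtain ⟨a, ha, rfl⟩ := P.exists_cls u
        obtain ⟨b, hb, rfl⟩ := P.exists_cls v
        rw [huv]
        rw [cls_mul, cls_eq_iff] at huv
        rcases huv with rfl | h
        · have ha0 := P.pos a ha
          have hb0 := P.pos b hb
          refine hmul _ _ (ih a (by omega) ha fun h => hI (P.I_ideal _ h _ hb))
            (ih b (by omega) hb fun h => hI ?_)
          rw [Nat.add_comm]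
          exact P.I_ideal _ h _ ha
        · exact absurd h.1 hI
  obtain ⟨a, ha, rfl⟩ := P.exists_cls q
  by_cases hI : a ∈ P.I
  · obtain ⟨s, hs, hsI⟩ : ∃ s ∈ P.S, s ∉ P.I := by
      by_contra! h
      exact P.I_proper (Set.Subset.antisymm P.I_sub h)
    have hpow : ∀ k : ℕ, ∃ h : (k + 1) * s ∈ P.S, p (P.cls ((k + 1) * s) h) := by
      intro k
      induction k with
      | zero => simpa using ⟨hs, key s hs hsI⟩
      | succ k ih =>
        obtain ⟨h, hp⟩ := ih
        have := hmul _ _ hp (key s hs hsI)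
        rw [cls_mul] at this
        rw [show (k + 1 + 1) * s = (k + 1) * s + s by ring]
        exact ⟨_, this⟩
    -- The multiples of `s` are unbounded, so one of them lies in the cofinite set `I`.
    obtain ⟨N, hN⟩ := P.finite_compl_I.bddAbove
    obtain ⟨h, hp⟩ := hpow N
    have hmem : (N + 1) * s ∈ P.I := by
      by_contra hn
      have h1 : (N + 1) * s ≤ N := hN hn
      have := P.pos s hs
      nlinarith
    rwa [(P.cls_eq_iff ha h).2 (Or.inr ⟨hI, hmem⟩)]
  · exact key a ha hI

end RQNSData

/-- let `Q₁`, `Q₂` be Rees quotients of numerical semigroups by proper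
ideals with minimal generating systems `X₁`, `X₂`, and suppose `|Q₁| = |Q₂|`.  Then a
semigroup homomorphism `φ : Q₁ → Q₂` is an isomorphism iff its restriction to `X₁` is
a bijection from `X₁` onto `X₂`. -/
theorem stmt_16 (P₁ P₂ : RQNSData) (hcard : Nat.card P₁.Q = Nat.card P₂.Q)
    (φ : P₁.Q → P₂.Q)
    (hhom : ∀ x y : P₁.Q, φ (x * y) = φ x * φ y) :
    Function.Bijective φ ↔ Set.BijOn φ P₁.mingen P₂.mingen := by
  constructor
  · intro hφ
    refine ⟨?_, hφ.1.injOn, ?_⟩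
    · rintro q hq ⟨u, v, huv⟩
      obtain ⟨u, rfl⟩ := hφ.2 u
      obtain ⟨v, rfl⟩ := hφ.2 v
      rw [← hhom] at huv
      exact hq ⟨u, v, hφ.1 huv⟩
    · intro r hr
      obtain ⟨q, rfl⟩ := hφ.2 r
      refine ⟨q, ?_, rfl⟩
      rintro ⟨u, v, rfl⟩
      exact hr ⟨φ u, φ v, hhom u v⟩
  · intro h
    have hsurj : Function.Surjective φ := by
      refine P₂.generated (fun r => ∃ q, φ q = r) ?_ ?_
      · intro r hr
        obtain ⟨q, -, hq⟩ := h.surjOn hr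
        exact ⟨q, hq⟩
      · rintro _ _ ⟨u, rfl⟩ ⟨v, rfl⟩
        exact ⟨u * v, hhom u v⟩
    exact (Nat.bijective_iff_surjective_and_card φ).2 ⟨hsurj, hcard⟩
end

section
/- Every finite commutative nilpotent semigroup divides a finite direct product of Rees quotients of ℕ: if Q is a finite commutative semigroup such that for some n ≥ 1 all products of n elements of Q are equal (to an absorbing zero of Q), then there exist k ≥ 1, positive integers r₁, …, r_k, a subsemigroup T of the direct product semigroup (ℕ/I_{r₁}) × ⋯ × (ℕ/I_{r_k}), and a surjective semigroup homomorphism from T onto Q. Consequently, the class Cℕ = {ℕ/I_r : r ∈ ℕ} generates the pseudovariety N ∩ Com of finite nilpotent commutative semigroups. -/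
/-- The operation of the Rees quotient `ℕ / I_r` of the positive integers by the ideal
`I_r = {x : x ≥ r}`, modelled on `Fin r`: the element `0` is the zero `∞`, the
elements `1, …, r-1` are the finite elements, and `a ⊕ b = a + b` when `a, b` are
finite with `a + b < r`, and `∞` otherwise. -/
def nquotMul {r : ℕ} (a b : Fin r) : Fin r :=
  if h : a.1 + b.1 < r ∧ 0 < a.1 ∧ 0 < b.1 then ⟨a.1 + b.1, h.1⟩ else ⟨0, a.pos⟩

/-- The sum of `n ^ i` over `i` in `s`; when all multiplicities are below `n`, this is the number
whose base-`n` digits are the multiplicities of `s`. -/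
def digitSum (n m : ℕ) (s : Multiset (Fin m)) : ℕ :=
  (s.map fun i : Fin m => n ^ (i : ℕ)).sum

/-- The total weight of `s` when the generator `i` has weight `n ^ m + n ^ i`. -/
def wt (n m : ℕ) (s : Multiset (Fin m)) : ℕ :=
  n ^ m * s.card + digitSum n m s

/-- The class of `wt n m s` in `ℕ / I_r`, with `0 : Fin r` standing for the zero `∞`. -/
def enc (n m : ℕ) {r : ℕ} (hr : 0 < r) (s : Multiset (Fin m)) : Fin r :=
  if h : wt n m s < r then ⟨wt n m s, h⟩ else ⟨0, hr⟩

theorem wt_add (n m : ℕ) (s t : Multiset (Fin m)) : wt n m (s + t) = wt n m s + wt n m t := by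
  simp only [wt, digitSum, Multiset.card_add, Multiset.map_add, Multiset.sum_add]
  ring

theorem wt_pos {n m : ℕ} (hn : 1 ≤ n) {s : Multiset (Fin m)} (hs : s ≠ 0) : 0 < wt n m s := by
  have h1 : 0 < s.card := Multiset.card_pos.2 hs
  have h2 : 0 < n ^ m := Nat.pow_pos hn
  have := Nat.mul_pos h2 h1
  unfold wt
  omega

theorem enc_add {n m r : ℕ} (hn : 1 ≤ n) (hr : 0 < r) {s t : Multiset (Fin m)}
    (hs : s ≠ 0) (ht : t ≠ 0) :
    nquotMul (enc n m hr s) (enc n m hr t) = enc n m hr (s + t) := by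
  have h1 := wt_pos hn hs
  have h2 := wt_pos hn ht
  have h3 := wt_add n m s t
  have hval (u : Multiset (Fin m)) :
      (enc n m hr u : ℕ) = if wt n m u < r then wt n m u else 0 := by
    unfold enc
    split_ifs <;> rfl
  have hmul (a b : Fin r) :
      (nquotMul a b : ℕ) = if a.1 + b.1 < r ∧ 0 < a.1 ∧ 0 < b.1 then a.1 + b.1 else 0 := by
    unfold nquotMul
    split_ifs <;> rfl
  apply Fin.ext
  rw [hmul, hval, hval, hval]
  grind

/-- The multiplicities of a multiset with fewer than `n` elements, as base-`n` digits. -/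
def digits {n m : ℕ} (s : Multiset (Fin m)) (hs : s.card < n) : Fin m → Fin n :=
  fun i => ⟨s.count i, (Multiset.count_le_card i s).trans_lt hs⟩

theorem digitSum_eq {n m : ℕ} (s : Multiset (Fin m)) (hs : s.card < n) :
    digitSum n m s = (finFunctionFinEquiv (digits s hs) : ℕ) := by
  rw [finFunctionFinEquiv_apply, digitSum, Finset.sum_multiset_map_count]
  refine Finset.sum_subset (Finset.subset_univ _) fun i _ hi => ?_
  have : s.count i = 0 := by simpa using hi
  simp [this]

theorem digitSum_lt {n m : ℕ} {s : Multiset (Fin m)} (hs : s.card < n) :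
    digitSum n m s < n ^ m := by
  rw [digitSum_eq s hs]
  exact Fin.is_lt _

theorem digitSum_inj {n m : ℕ} {s t : Multiset (Fin m)} (hs : s.card < n) (ht : t.card < n)
    (h : digitSum n m s = digitSum n m t) : s = t := by
  rw [digitSum_eq s hs, digitSum_eq t ht] at h
  have h' := finFunctionFinEquiv.injective (Fin.ext h)
  ext i
  exact congrArg Fin.val (congrFun h' i)

theorem wt_lt_iff {n m : ℕ} (s : Multiset (Fin m)) :
    wt n m s < n * n ^ m ↔ s.card < n := by
  constructor
  · intro h
    by_contra! hc
    have := Nat.mul_le_mul_left (n ^ m) hc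
    unfold wt at h
    rw [mul_comm n] at h
    omega
  · intro h
    have h1 := digitSum_lt h
    have h2 := Nat.mul_le_mul_left (n ^ m) (Nat.succ_le_of_lt h)
    rw [Nat.mul_succ] at h2
    unfold wt
    rw [mul_comm n]
    omega

theorem wt_inj {n m : ℕ} {s t : Multiset (Fin m)} (hs : s.card < n) (ht : t.card < n)
    (h : wt n m s = wt n m t) : s = t := by
  have h1 := digitSum_lt hs
  have h2 := digitSum_lt ht
  apply digitSum_inj hs ht
  have h3 := congrArg (· % n ^ m) h
  simpa [wt, Nat.mul_add_mod, Nat.mod_eq_of_lt h1, Nat.mod_eq_of_lt h2] using h3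

/-- Nonempty multisets with the same class in `ℕ / I_{n * n ^ m}` are equal or both have at least
`n` elements. -/
theorem eq_or_le_card_of_enc_eq {n m : ℕ} (hn : 1 ≤ n) (hr : 0 < n * n ^ m)
    {s t : Multiset (Fin m)} (hs : s ≠ 0) (ht : t ≠ 0) (h : enc n m hr s = enc n m hr t) :
    s = t ∨ (n ≤ s.card ∧ n ≤ t.card) := by
  have h1 := wt_pos hn hs
  have h2 := wt_pos hn ht
  have h3 := wt_lt_iff (n := n) s
  have h4 := wt_lt_iff (n := n) t
  have h5 := congrArg Fin.val h
  by_cases hsn : s.card < n <;> by_cases htn : t.card < n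
  · left
    refine wt_inj hsn htn ?_
    simpa [enc, h3.2 hsn, h4.2 htn] using h5
  · simp [enc, h3.2 hsn, mt h4.1 htn] at h5
    omega
  · simp [enc, mt h3.1 hsn, h4.2 htn] at h5
    omega
  · right
    omega

/-- The product of the elements of `Q` indexed by `s`. It is formed in `WithOne Q`, because the
empty product need not exist in `Q`. -/
def prodOne {Q : Type*} [CommSemigroup Q] {m : ℕ} (f : Fin m → Q) (s : Multiset (Fin m)) :
    WithOne Q :=
  (s.map fun i => (f i : WithOne Q)).prod

theorem prodOne_mem_SPow {Q : Type*} [CommSemigroup Q] {m : ℕ} (f : Fin m → Q) (k : ℕ) :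
    ∀ s : Multiset (Fin m), s.card = k + 1 → ∃ q ∈ SPow Q (k + 1), prodOne f s = (q : WithOne Q) := by
  induction k with
  | zero =>
    intro s hs
    obtain ⟨a, rfl⟩ := Multiset.card_eq_one.1 hs
    exact ⟨f a, trivial, by simp [prodOne]⟩
  | succ k ih =>
    intro s hs
    obtain ⟨a, t, rfl⟩ := Multiset.card_pos_iff_exists_mem.1 (by omega : 0 < s.card) |>.imp
      fun a ha => Multiset.exists_cons_of_mem ha
    obtain ⟨q, hq, hqt⟩ := ih t (by simpa using hs)
    refine ⟨q * f a, ⟨q, hq, f a, rfl⟩, ?_⟩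
    rw [WithOne.coe_mul, ← hqt, mul_comm]
    simp [prodOne]

theorem exists_prodOne_eq {Q : Type*} [CommSemigroup Q] {m : ℕ} (f : Fin m → Q)
    {s : Multiset (Fin m)} (hs : s ≠ 0) : ∃ q : Q, prodOne f s = (q : WithOne Q) := by
  have := Multiset.card_pos.2 hs
  obtain ⟨q, -, hq⟩ := prodOne_mem_SPow f (s.card - 1) s (by omega)
  exact ⟨q, hq⟩

theorem SPow_subset_of_le {Q : Type*} [Semigroup Q] {z : Q} (hz : ∀ q : Q, z * q = z) {n : ℕ}
    (hn : 1 ≤ n) (hnilp : SPow Q n = {z}) {k : ℕ} (hk : n ≤ k) : ∀ q ∈ SPow Q k, q = z := by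
  induction k, hk using Nat.le_induction with
  | base => intro q hq; simpa [hnilp] using hq
  | succ k hk ih =>
    obtain ⟨j, rfl⟩ : ∃ j, k = j + 1 := ⟨k - 1, by omega⟩
    rintro q ⟨a, ha, b, rfl⟩
    rw [ih a ha, hz]

/-- The class of a nonempty multiset in `ℕ / I_{n * n ^ m}` determines its product in `Q`. -/
theorem prodOne_eq_of_enc_eq {Q : Type*} [CommSemigroup Q] {z : Q} (hz : ∀ q : Q, z * q = z)
    {n m : ℕ} (hn : 1 ≤ n) (hnilp : SPow Q n = {z}) (f : Fin m → Q) (hr : 0 < n * n ^ m)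
    {s t : Multiset (Fin m)} (hs : s ≠ 0) (ht : t ≠ 0) (h : enc n m hr s = enc n m hr t) :
    prodOne f s = prodOne f t := by
  have key : ∀ u : Multiset (Fin m), n ≤ u.card → prodOne f u = (z : WithOne Q) := by
    intro u hu
    obtain ⟨q, hq, hqu⟩ := prodOne_mem_SPow f (u.card - 1) u (by omega)
    rw [hqu, SPow_subset_of_le hz hn hnilp (by omega) q hq]
  rcases eq_or_le_card_of_enc_eq hn hr hs ht h with rfl | ⟨h1, h2⟩
  · rfl
  · rw [key s h1, key t h2]

/-- every finite commutative nilpotent semigroup `Q` (i.e. for some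
`n ≥ 1` all products of `n` elements equal an absorbing zero `z`) divides a finite
direct product of Rees quotients `ℕ / I_r` of the positive integers: there are `k ≥ 1`
and positive integers `r₁, …, r_k`, a subsemigroup `T` of the direct product
`(ℕ/I_{r₁}) × ⋯ × (ℕ/I_{r_k})` (with componentwise operation), and a surjective
semigroup homomorphism from `T` onto `Q`.  Consequently `Cℕ = {ℕ/I_r : r ∈ ℕ}`
generates the pseudovariety of finite nilpotent commutative semigroups. -/
theorem stmt_18 (Q : Type*) [Semigroup Q] [Finite Q]
    (hcomm : ∀ x y : Q, x * y = y * x)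
    (z : Q) (hz : ∀ q : Q, z * q = z ∧ q * z = z)
    (n : ℕ) (hn : 1 ≤ n) (hnilp : SPow Q n = {z}) :
    ∃ k : ℕ, 1 ≤ k ∧ ∃ r : Fin k → ℕ, (∀ i, 0 < r i) ∧
      ∃ T : Set (∀ i : Fin k, Fin (r i)),
        (∀ x ∈ T, ∀ y ∈ T, (fun i => nquotMul (x i) (y i)) ∈ T) ∧
        ∃ ψ : (∀ i : Fin k, Fin (r i)) → Q,
          (∀ x ∈ T, ∀ y ∈ T, ψ (fun i => nquotMul (x i) (y i)) = ψ x * ψ y) ∧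
          (∀ q : Q, ∃ p ∈ T, ψ p = q) := by
  classical
  let _ : CommSemigroup Q := { mul_comm := hcomm }
  obtain ⟨m, ⟨g⟩⟩ := Finite.exists_equiv_fin Q
  have hr : 0 < n * n ^ m := Nat.mul_pos hn (Nat.pow_pos hn)
  -- `ψ` picks the product of any nonempty multiset with the given class.
  have hex : ∀ x : Fin (n * n ^ m), ∃ q : Q, ∀ s : Multiset (Fin m), s ≠ 0 →
      enc n m hr s = x → prodOne g.symm s = (q : WithOne Q) := by
    intro x
    by_cases hx : ∃ s : Multiset (Fin m), s ≠ 0 ∧ enc n m hr s = x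
    · obtain ⟨s, hs, rfl⟩ := hx
      obtain ⟨q, hq⟩ := exists_prodOne_eq g.symm hs
      exact ⟨q, fun t ht hts => by
        rw [← hq, prodOne_eq_of_enc_eq (fun q => (hz q).1) hn hnilp g.symm hr ht hs hts]⟩
    · exact ⟨z, fun s hs hsx => (hx ⟨s, hs, hsx⟩).elim⟩
  choose ψ hψ using hex
  refine ⟨1, le_rfl, fun _ => n * n ^ m, fun _ => hr,
    {x | ∃ s : Multiset (Fin m), s ≠ 0 ∧ x = fun _ => enc n m hr s}, ?_, fun x => ψ (x 0), ?_, ?_⟩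
  · rintro _ ⟨s, hs, rfl⟩ _ ⟨t, ht, rfl⟩
    exact ⟨s + t, by simp [hs], funext fun _ => enc_add hn hr hs ht⟩
  · rintro _ ⟨s, hs, rfl⟩ _ ⟨t, ht, rfl⟩
    have h1 := hψ _ s hs rfl
    have h2 := hψ _ t ht rfl
    have h3 := hψ _ (s + t) (by simp [hs]) rfl
    apply WithOne.coe_injective
    simp only [enc_add hn hr hs ht]
    rw [WithOne.coe_mul, ← h1, ← h2, ← h3]
    simp [prodOne]
  · intro q
    refine ⟨fun _ => enc n m hr {g q}, ⟨{g q}, by simp, rfl⟩, ?_⟩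
    have h := hψ _ {g q} (by simp) rfl
    apply WithOne.coe_injective
    rw [← h]
    simp [prodOne]
end
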